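/- Let α, β > -1 and n ≥ 0. The n-th eigenvalue χ_{n,α} of the Sturm–Liouville operator L_c^{(α)}f = −d/dx[(1-x²)^{α+1} f'] + c²x²(1-x²)^α f on (−1,1) satisfies n(n+2α+1) ≤ χ_{n,α} ≤ n(n+2α+1) + c². -/

import Mathlib

open Real Set

/-- `χ` is an eigenvalue of the Sturm–Liouville operator
`L_c^{(α)} f = -d/dx[(1-x²)^{α+1} f'] + c² x² (1-x²)^α f` on `(-1,1)`, i.e. there is a
nontrivial bounded (twice differentiable) solution on `(-1,1)` of
`(1-x²) ψ'' - 2(α+1) x ψ' + (χ - c² x²) ψ = 0`. -/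
def IsGPSWFEigenvalue (c α χ : ℝ) : Prop :=
  ∃ ψ : ℝ → ℝ,
    (∃ x ∈ Ioo (-1 : ℝ) 1, ψ x ≠ 0) ∧
    (∀ x ∈ Ioo (-1 : ℝ) 1, DifferentiableAt ℝ ψ x) ∧
    (∀ x ∈ Ioo (-1 : ℝ) 1, DifferentiableAt ℝ (deriv ψ) x) ∧
    (∃ M : ℝ, ∀ x ∈ Ioo (-1 : ℝ) 1, |ψ x| ≤ M) ∧
    ∀ x ∈ Ioo (-1 : ℝ) 1,
      (1 - x ^ 2) * deriv (deriv ψ) x - 2 * (α + 1) * x * deriv ψ x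
        + (χ - c ^ 2 * x ^ 2) * ψ x = 0

/-!
The eigenvalues are counted by a Prüfer angle. For parameters `p = (χ, c²)` let `u` be the solution
of the differential equation that is regular at `x = 1`, and `θ p` the polar angle at `x = 0` of
`(u, (1 - x²)^{α+1} u')`. For `α ≥ 0` every solution bounded near `1` is a multiple of `u`, so by
parity a bounded solution on `(-1, 1)` exists iff `u(0) = 0` or `u'(0) = 0`, that is, iff
`2 θ p / π` is an integer. Lagrange's identity expresses the Wronskian at `0` of the regular
solutions for two parameters `p`, `q` as the integral over `[0, 1]` of their product against
`(1 - x²)^α ((q.1 - p.1) - (q.2 - p.2) x²)`. Hence `θ` increases with `χ`, decreases with `c²` and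
increases along the diagonal, which gives `θ (χ, c²) ≤ θ (χ, 0) ≤ θ (χ + c², c²)`. For `c = 0`, the
moments of `u` satisfy a recurrence by which, for `χ` not of the form `n (n + 2 α + 1)`, the
vanishing of one moment would force `u = 0`; so the spectrum is `{n (n + 2 α + 1)}`. The `n`-th
crossing of a multiple of `π / 2` by `θ (·, c²)` is then trapped between `n (n + 2 α + 1)` and
`n (n + 2 α + 1) + c²`.

For `-1 < α < 0` both solutions at each endpoint are bounded, so every real number is an eigenvalue
in the sense of `IsGPSWFEigenvalue`, and no sequence increasing from a least element enumerates
them.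
-/

open Filter Topology

section RealAnalysis

lemma le_mul_exp_integral_of_deriv_le {E E' g : ℝ → ℝ} {a b : ℝ} (hab : a ≤ b)
    (hE : ContinuousOn E (Icc a b)) (hE' : ∀ x ∈ Ioo a b, HasDerivAt E (E' x) x)
    (hg : ContinuousOn g (Icc a b)) (hle : ∀ x ∈ Ioo a b, E' x ≤ g x * E x) :
    E b ≤ E a * exp (∫ x in a..b, g x) := by
  set G : ℝ → ℝ := fun x => ∫ t in a..x, g t with hG
  have hgi : IntervalIntegrable g MeasureTheory.volume a b := hg.intervalIntegrable_of_Icc hab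
  have hGc : ContinuousOn G (Icc a b) := by
    simpa only [uIcc_of_le hab] using
      intervalIntegral.continuousOn_primitive_interval' hgi left_mem_uIcc
  have hG' : ∀ x ∈ Ioo a b, HasDerivAt G (g x) x := fun x hx =>
    intervalIntegral.integral_hasDerivAt_right
      (hgi.mono_set (uIcc_subset_uIcc_left (by rw [uIcc_of_le hab]; exact Ioo_subset_Icc_self hx)))
      ((hg.mono Ioo_subset_Icc_self).stronglyMeasurableAtFilter isOpen_Ioo x hx)
      (hg.continuousAt (Icc_mem_nhds hx.1 hx.2))
  have hanti : AntitoneOn (fun x => E x * exp (-G x)) (Icc a b) := by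
    refine antitoneOn_of_hasDerivWithinAt_nonpos (convex_Icc a b) (hE.mul hGc.neg.rexp)
      (f' := fun x => E' x * exp (-G x) + E x * (exp (-G x) * -g x)) (fun x hx => ?_)
      (fun x hx => ?_) <;> rw [interior_Icc] at hx
    · exact ((hE' x hx).mul (hG' x hx).neg.exp).hasDerivWithinAt
    · nlinarith [hle x hx, exp_pos (-G x)]
  have hba : E b * exp (-G b) ≤ E a := by
    simpa [hG] using hanti (left_mem_Icc.2 hab) (right_mem_Icc.2 hab) hab
  calc E b = E b * exp (-G b) * exp (G b) := by rw [mul_assoc, ← Real.exp_add]; simp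
    _ ≤ E a * exp (G b) := by gcongr

-- `1 / (b - x)` is not integrable up to `b`, so `f` would exceed every bound if `κ` were positive.
lemma nonpos_of_div_sub_le_deriv {f f' : ℝ → ℝ} {a b κ M : ℝ} (hab : a < b)
    (hf : ∀ x ∈ Ioo a b, HasDerivAt f (f' x) x) (hκ : ∀ x ∈ Ioo a b, κ / (b - x) ≤ f' x)
    (hM : ∀ x ∈ Ioo a b, f x ≤ M) : κ ≤ 0 := by
  by_contra! hpos
  have hd : ∀ x ∈ Ioo a b,
      HasDerivAt (fun x => f x + κ * log (b - x)) (f' x - κ / (b - x)) x := fun x hx => by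
    refine ((hf x hx).add ((((hasDerivAt_id x).const_sub b).log
      (sub_pos.2 hx.2).ne').const_mul κ)).congr_deriv ?_
    simp only [id]
    ring
  have hmono : MonotoneOn (fun x => f x + κ * log (b - x)) (Ioo a b) := by
    refine monotoneOn_of_hasDerivWithinAt_nonneg (convex_Ioo a b)
      (fun x hx => (hd x hx).continuousAt.continuousWithinAt)
      (fun x hx => (hd x (interior_subset hx)).hasDerivWithinAt) fun x hx => ?_
    exact sub_nonneg.2 (hκ x (interior_subset hx))
  obtain ⟨m, hm⟩ := nonempty_Ioo.2 hab
  have hsub : Tendsto (fun x => b - x) (𝓝[<] b) (𝓝[>] 0) := by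
    refine tendsto_nhdsWithin_iff.2 ⟨?_, ?_⟩
    · exact (Continuous.tendsto' (by fun_prop) b 0 (sub_self b)).mono_left nhdsWithin_le_nhds
    · filter_upwards [self_mem_nhdsWithin] with x (hx : x < b) using sub_pos.2 hx
  have hlim : Tendsto (fun x => M + κ * log (b - x)) (𝓝[<] b) atBot :=
    tendsto_atBot_add_const_left _ _
      ((tendsto_log_nhdsGT_zero.comp hsub).const_mul_atBot hpos)
  obtain ⟨x, hxlt, hmx, hxb⟩ := ((hlim.eventually_lt_atBot (f m + κ * log (b - m))).and
    (Ioo_mem_nhdsLT hm.2)).exists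
  have hx : x ∈ Ioo a b := ⟨hm.1.trans hmx, hxb⟩
  linarith [hmono hm hx hmx.le, hM x hx]

lemma strictMono_of_eventually_lt_right {f : ℝ → ℝ} (hf : Continuous f)
    (h : ∀ x, ∀ᶠ ε in 𝓝[>] (0 : ℝ), f x < f (x + ε)) : StrictMono f := by
  intro a b hab
  have hlt : ∀ x ∈ Ico a b, ∃ y ∈ Icc a b, f x < f y := fun x hx => by
    obtain ⟨ε, hε, hpos, hb⟩ := ((h x).and (Ioo_mem_nhdsGT (sub_pos.2 hx.2))).exists
    exact ⟨x + ε, ⟨by linarith [hx.1], by linarith⟩, hε⟩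
  obtain ⟨m, hm, hmax⟩ := isCompact_Icc.exists_isMaxOn (nonempty_Icc.2 hab.le) hf.continuousOn
  obtain rfl : m = b := by
    by_contra hne
    obtain ⟨y, hy, hmy⟩ := hlt m ⟨hm.1, lt_of_le_of_ne hm.2 hne⟩
    exact (hmax hy).not_gt hmy
  obtain ⟨y, hy, hay⟩ := hlt a ⟨le_rfl, hab⟩
  exact hay.trans_le (hmax hy)

lemma strictMono_of_eventually_sin_sub_pos {θ : ℝ → ℝ} (hθ : Continuous θ)
    (h : ∀ x, ∀ᶠ ε in 𝓝[>] (0 : ℝ), 0 < sin (θ (x + ε) - θ x)) : StrictMono θ := by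
  refine strictMono_of_eventually_lt_right hθ fun x => ?_
  have hlim : Tendsto (fun ε => θ (x + ε) - θ x) (𝓝 0) (𝓝 0) :=
    Continuous.tendsto' (by fun_prop) _ _ (by simp)
  have hnear : ∀ᶠ ε in 𝓝[>] (0 : ℝ), -π < θ (x + ε) - θ x :=
    (hlim.eventually_const_lt (neg_lt_zero.2 pi_pos)).filter_mono nhdsWithin_le_nhds
  filter_upwards [hnear, h x] with ε hε hsin
  by_contra! hle
  exact (sin_nonpos_of_nonpos_of_neg_pi_le (sub_nonpos.2 hle) hε.le).not_gt hsin

lemma continuous_intervalIntegral_of_continuousOn {X : Type*} [TopologicalSpace X]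
    [FirstCountableTopology X] {f : X → ℝ → ℝ} {a b : ℝ} (hab : a ≤ b)
    (hf : ContinuousOn (Function.uncurry f) (univ ×ˢ Icc a b)) :
    Continuous fun p => ∫ x in a..b, f p x := by
  have hproj : Continuous (Function.uncurry fun p x => f p (projIcc a b hab x)) :=
    hf.comp_continuous (f := fun z : X × ℝ => (z.1, (projIcc a b hab z.2 : ℝ))) (by fun_prop)
      fun z => ⟨mem_univ _, (projIcc a b hab z.2).2⟩
  refine (intervalIntegral.continuous_parametric_intervalIntegral_of_continuous' hproj
    a b).congr fun p => intervalIntegral.integral_congr fun x hx => ?_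
  rw [uIcc_of_le hab] at hx
  simp only [projIcc_of_mem hab hx]

lemma exists_continuous_polar {X : Type*} [TopologicalSpace X] [SimplyConnectedSpace X]
    [LocallyPathConnectedSpace X] {f g : X → ℝ} (hf : Continuous f) (hg : Continuous g)
    (hfg : ∀ x, f x ≠ 0 ∨ g x ≠ 0) :
    ∃ θ r : X → ℝ, Continuous θ ∧
      ∀ x, 0 < r x ∧ f x = r x * cos (θ x) ∧ g x = r x * sin (θ x) := by
  let Z : C(X, ℂ) := ⟨fun x => f x + g x * Complex.I, by fun_prop⟩
  have hre : ∀ x, (Z x).re = f x := fun x => by simp [Z]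
  have him : ∀ x, (Z x).im = g x := fun x => by simp [Z]
  have hZ : ∀ x, Z x ≠ 0 := fun x h0 => (hfg x).elim
    (fun h => h (by rw [← hre, h0, Complex.zero_re]))
    (fun h => h (by rw [← him, h0, Complex.zero_im]))
  obtain ⟨x₀⟩ := (inferInstance : Nonempty X)
  obtain ⟨L, ⟨-, hL⟩, -⟩ := Complex.isCoveringMapOn_exp.existsUnique_continuousMap_lifts
    Z (a₀ := x₀) (e₀ := Complex.log (Z x₀)) (Complex.exp_log (hZ x₀)) hZ
  have hexp : ∀ x, Complex.exp (L x) = Z x := congrFun hL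
  refine ⟨fun x => (L x).im, fun x => exp (L x).re, by fun_prop, fun x => ⟨exp_pos _, ?_, ?_⟩⟩
  · rw [← hre, ← hexp, Complex.exp_re]
  · rw [← him, ← hexp, Complex.exp_im]

end RealAnalysis

section Counting

variable {f : ℝ → ℝ} {d : ℕ → ℝ}

lemma sub_one_lt_of_mem_range_intCast_iff (hf : Continuous f) (hmono : StrictMono f)
    (hd : Monotone d) (hiff : ∀ x, f x ∈ range ((↑) : ℤ → ℝ) ↔ x ∈ range d) (x : ℝ) :
    f (d 0) - 1 < f x := by
  by_contra! hx
  obtain ⟨k, hk⟩ := (hiff (d 0)).2 ⟨0, rfl⟩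
  obtain ⟨y, hy⟩ := mem_range_of_exists_le_of_exists_ge hf ⟨x, hx⟩ ⟨d 0, by linarith⟩
  obtain ⟨m, rfl⟩ := (hiff y).1 ⟨k - 1, by rw [hy, ← hk]; push_cast; rfl⟩
  linarith [hmono.monotone (hd (Nat.zero_le m))]

lemma apply_eq_add_of_mem_range_intCast_iff (hf : Continuous f) (hmono : StrictMono f)
    (hd : StrictMono d) (hiff : ∀ x, f x ∈ range ((↑) : ℤ → ℝ) ↔ x ∈ range d) (n : ℕ) :
    f (d n) = f (d 0) + n := by
  choose k hk using fun n => (hiff (d n)).2 ⟨n, rfl⟩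
  have hkmono : StrictMono k := fun a b hab => by
    have := hmono (hd hab)
    rw [← hk, ← hk] at this
    exact_mod_cast this
  have hsucc : ∀ n, k (n + 1) = k n + 1 := fun n => by
    have hle : k n + 1 ≤ k (n + 1) := hkmono n.lt_succ_self
    obtain ⟨y, hy⟩ : ((k n + 1 : ℤ) : ℝ) ∈ range f := mem_range_of_exists_le_of_exists_ge hf
      ⟨d n, by rw [← hk]; exact_mod_cast (lt_add_one (k n)).le⟩
      ⟨d (n + 1), by rw [← hk]; exact_mod_cast hle⟩
    obtain ⟨m, rfl⟩ := (hiff y).1 ⟨_, hy.symm⟩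
    have hm : k m = k n + 1 := by rw [← hk] at hy; exact_mod_cast hy
    have hnm : n < m := hkmono.lt_iff_lt.1 (by omega)
    have : k (n + 1) ≤ k m := hkmono.monotone hnm
    omega
  induction n with
  | zero => simp
  | succ n ih =>
    rw [← hk, hsucc, Int.cast_add, hk, ih]
    push_cast
    ring

lemma exists_strictMono_mem_Icc_of_le_of_le {g : ℝ → ℝ} {s : ℝ} (hf : Continuous f)
    (hfm : StrictMono f) (hg : Continuous g) (hgm : StrictMono g) (hgf : ∀ x, g x ≤ f x)
    (hfg : ∀ x, f x ≤ g (x + s)) (hd : StrictMono d)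
    (hiff : ∀ x, f x ∈ range ((↑) : ℤ → ℝ) ↔ x ∈ range d) :
    ∃ μ : ℕ → ℝ, StrictMono μ ∧ (∀ x, g x ∈ range ((↑) : ℤ → ℝ) ↔ x ∈ range μ) ∧
      ∀ n, μ n ∈ Icc (d n) (d n + s) := by
  have hs : 0 ≤ s := by
    simpa using hfm.le_iff_le.1 ((hfg 0).trans (hgf _))
  have hfd := apply_eq_add_of_mem_range_intCast_iff hf hfm hd hiff
  have hμ : ∀ n, ∃ y ∈ Icc (d n) (d n + s), g y = f (d 0) + n := fun n =>
    intermediate_value_Icc (by linarith) hg.continuousOn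
      ⟨(hgf _).trans (hfd n).le, (hfd n).ge.trans (hfg _)⟩
  choose μ hμI hgμ using hμ
  obtain ⟨k₀, hk₀⟩ := (hiff (d 0)).2 ⟨0, rfl⟩
  refine ⟨μ, fun m n hmn => ?_, fun x => ⟨?_, ?_⟩, hμI⟩
  · rw [← hgm.lt_iff_lt, hgμ, hgμ]
    gcongr
  · rintro ⟨k, hk⟩
    have hlow : f (d 0) - 1 < g x := by
      have := hfg (x - s)
      rw [sub_add_cancel] at this
      exact (sub_one_lt_of_mem_range_intCast_iff hf hfm hd.monotone hiff _).trans_le this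
    rw [← hk, ← hk₀] at hlow
    have hk₀k : k₀ - 1 < k := by exact_mod_cast hlow
    obtain ⟨m, hm⟩ := Int.eq_ofNat_of_zero_le (by omega : 0 ≤ k - k₀)
    refine ⟨m, hgm.injective ?_⟩
    rw [hgμ, ← hk, ← hk₀, eq_add_of_sub_eq' hm]
    push_cast
    rfl
  · rintro ⟨m, rfl⟩
    exact ⟨k₀ + m, by rw [hgμ, ← hk₀]; push_cast; rfl⟩

end Counting

section Moments

variable {h f : ℝ → ℝ} {a b : ℝ}

lemma integral_polynomial_eval_mul_eq_zero (hab : a ≤ b) (hh : ContinuousOn h (Icc a b))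
    (hf : ContinuousOn f (Icc a b)) (hint : ∀ k : ℕ, ∫ x in a..b, h x ^ k * f x = 0)
    (p : Polynomial ℝ) : ∫ x in a..b, p.eval (h x) * f x = 0 := by
  have hi (q : Polynomial ℝ) :
      IntervalIntegrable (fun x => q.eval (h x) * f x) MeasureTheory.volume a b :=
    ((q.continuous.comp_continuousOn hh).mul hf).intervalIntegrable_of_Icc hab
  induction p using Polynomial.induction_on' with
  | add p q hp hq =>
    simp only [Polynomial.eval_add, add_mul]
    rw [intervalIntegral.integral_add (hi p) (hi q), hp, hq, add_zero]
  | monomial k c =>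
    simp only [Polynomial.eval_monomial, mul_assoc]
    rw [intervalIntegral.integral_const_mul, hint, mul_zero]

lemma integral_mul_eq_zero_of_forall_integral_pow_mul_eq_zero (hab : a ≤ b)
    (hh : ContinuousOn h (Icc a b)) (hinj : InjOn h (Icc a b)) (hf : ContinuousOn f (Icc a b))
    (hint : ∀ k : ℕ, ∫ x in a..b, h x ^ k * f x = 0) (g : C(Icc a b, ℝ)) :
    ∫ x in a..b, g (projIcc a b hab x) * f x = 0 := by
  let H : C(Icc a b, ℝ) := ⟨fun x => h x, hh.domRestrict⟩
  let L : C(Icc a b, ℝ) → ℝ := fun g => ∫ x in a..b, g (projIcc a b hab x) * f x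
  have hL : Continuous L := continuous_intervalIntegral_of_continuousOn hab <| by
    have hf₂ : ContinuousOn (fun z : C(Icc a b, ℝ) × ℝ => f z.2) (univ ×ˢ Icc a b) :=
      hf.comp continuousOn_snd fun z hz => hz.2
    exact ContinuousOn.mul (Continuous.continuousOn (by fun_prop)) hf₂
  have hLpoly (p : Polynomial ℝ) : L (Polynomial.aeval H p) = 0 := by
    rw [← integral_polynomial_eval_mul_eq_zero hab hh hf hint p]
    refine intervalIntegral.integral_congr fun x hx => ?_
    rw [uIcc_of_le hab] at hx
    simp only [projIcc_of_mem hab hx, Polynomial.aeval_continuousMap_apply]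
    rfl
  have hdense : (Algebra.adjoin ℝ {H}).topologicalClosure = ⊤ :=
    ContinuousMap.subalgebra_topologicalClosure_eq_top_of_separatesPoints _ fun x y hxy =>
      ⟨H, ⟨H, Algebra.subset_adjoin rfl, rfl⟩,
        fun hHxy => hxy (Subtype.ext (hinj x.2 y.2 hHxy))⟩
  have hg : g ∈ (Algebra.adjoin ℝ {H}).topologicalClosure := hdense ▸ Algebra.mem_top
  refine closure_minimal (t := {g | L g = 0}) ?_ (isClosed_eq hL continuous_const) hg
  intro q hq
  obtain ⟨p, rfl⟩ := (Algebra.adjoin_singleton_eq_range_aeval ℝ H).le hq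
  exact hLpoly p

lemma eqOn_zero_of_forall_integral_pow_mul_eq_zero (hab : a < b) (hh : ContinuousOn h (Icc a b))
    (hinj : InjOn h (Icc a b)) (hf : ContinuousOn f (Icc a b))
    (hint : ∀ k : ℕ, ∫ x in a..b, h x ^ k * f x = 0) : EqOn f 0 (Icc a b) := by
  have hff : ∫ x in a..b, f x * f x = 0 := by
    rw [← integral_mul_eq_zero_of_forall_integral_pow_mul_eq_zero hab.le hh hinj hf hint
      ⟨fun x => f x, hf.domRestrict⟩]
    refine intervalIntegral.integral_congr fun x hx => ?_
    rw [uIcc_of_le hab.le] at hx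
    simp only [projIcc_of_mem hab.le hx]
    rfl
  intro c hc
  by_contra hne
  exact (intervalIntegral.integral_pos hab (hf.mul hf) (fun x _ => mul_self_nonneg _)
    ⟨c, hc, mul_self_pos.2 hne⟩).ne' hff

end Moments

/-- `v`, with flux `y = v' / ρ`, solves the Sturm–Liouville equation `(v' / ρ)' + κ v = 0` on `I`,
written as a first-order system. -/
structure IsSLSolution (ρ κ : ℝ → ℝ) (I : Set ℝ) (v y : ℝ → ℝ) : Prop where
  hasDerivAt : ∀ x ∈ I, HasDerivAt v (ρ x * y x) x
  hasDerivAt_flux : ∀ x ∈ I, HasDerivAt y (-(κ x * v x)) x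

namespace IsSLSolution

variable {ρ κ v y z ζ : ℝ → ℝ} {I J : Set ℝ} {a b : ℝ}

lemma mono (h : IsSLSolution ρ κ I v y) (hJI : J ⊆ I) : IsSLSolution ρ κ J v y :=
  ⟨fun x hx => h.hasDerivAt x (hJI hx), fun x hx => h.hasDerivAt_flux x (hJI hx)⟩

lemma add_const_mul (h : IsSLSolution ρ κ I v y) (hz : IsSLSolution ρ κ I z ζ) (r : ℝ) :
    IsSLSolution ρ κ I (fun x => v x + r * z x) (fun x => y x + r * ζ x) where
  hasDerivAt x hx :=
    ((h.hasDerivAt x hx).add ((hz.hasDerivAt x hx).const_mul r)).congr_deriv (by ring)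
  hasDerivAt_flux x hx :=
    ((h.hasDerivAt_flux x hx).add ((hz.hasDerivAt_flux x hx).const_mul r)).congr_deriv (by ring)

lemma neg (h : IsSLSolution ρ κ I v y) :
    IsSLSolution ρ κ I (fun x => -v x) (fun x => -y x) where
  hasDerivAt x hx := (h.hasDerivAt x hx).neg.congr_deriv (by ring)
  hasDerivAt_flux x hx := (h.hasDerivAt_flux x hx).neg.congr_deriv (by ring)

lemma comp_const_sub (h : IsSLSolution ρ κ I v y) (c : ℝ) :
    IsSLSolution (fun x => ρ (c - x)) (fun x => κ (c - x)) ((fun x => c - x) ⁻¹' I)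
      (fun x => v (c - x)) (fun x => -y (c - x)) where
  hasDerivAt x hx := ((h.hasDerivAt _ hx).comp_const_sub c x).congr_deriv (by ring)
  hasDerivAt_flux x hx := ((h.hasDerivAt_flux _ hx).comp_const_sub c x).neg.congr_deriv (by ring)

lemma hasDerivAt_lagrange (h : IsSLSolution ρ κ I v y) {x f : ℝ} (hx : x ∈ I)
    (hz : HasDerivAt z (ρ x * ζ x) x) (hζ : HasDerivAt ζ f x) :
    HasDerivAt (fun x => v x * ζ x - y x * z x) (v x * (f + κ x * z x)) x :=
  (((h.hasDerivAt x hx).mul hζ).sub ((h.hasDerivAt_flux x hx).mul hz)).congr_deriv (by ring)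

lemma wronskian_eq (h : IsSLSolution ρ κ I v y) (hz : IsSLSolution ρ κ I z ζ) (hI : IsOpen I)
    (hIc : IsPreconnected I) (ha : a ∈ I) (hb : b ∈ I) :
    v a * ζ a - y a * z a = v b * ζ b - y b * z b := by
  have hW (x : ℝ) (hx : x ∈ I) : HasDerivAt (fun x => v x * ζ x - y x * z x) 0 x :=
    (h.hasDerivAt_lagrange hx (hz.hasDerivAt x hx) (hz.hasDerivAt_flux x hx)).congr_deriv
      (by ring)
  exact hI.is_const_of_deriv_eq_zero hIc
    (fun x hx => (hW x hx).differentiableAt.differentiableWithinAt)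
    (fun x hx => (hW x hx).deriv) ha hb

lemma sq_add_sq_le (hab : a ≤ b) (h : IsSLSolution ρ κ (Icc a b) v y)
    (hρ : ContinuousOn ρ (Icc a b)) (hκ : ContinuousOn κ (Icc a b)) :
    v b ^ 2 + y b ^ 2 ≤ (v a ^ 2 + y a ^ 2) * exp (∫ x in a..b, (|ρ x| + |κ x|)) := by
  have hE (x : ℝ) (hx : x ∈ Icc a b) : HasDerivAt (fun x => v x ^ 2 + y x ^ 2)
      (2 * v x * (ρ x * y x) + 2 * y x * -(κ x * v x)) x :=
    (((h.hasDerivAt x hx).pow 2).add ((h.hasDerivAt_flux x hx).pow 2)).congr_deriv (by simp)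
  refine le_mul_exp_integral_of_deriv_le (E := fun x => v x ^ 2 + y x ^ 2) hab
    (fun x hx => (hE x hx).continuousAt.continuousWithinAt)
    (fun x hx => hE x (Ioo_subset_Icc_self hx)) (hρ.abs.add hκ.abs) fun x _ => ?_
  calc 2 * v x * (ρ x * y x) + 2 * y x * -(κ x * v x) = (ρ x - κ x) * (2 * v x * y x) := by ring
    _ ≤ |ρ x - κ x| * |2 * v x * y x| := by rw [← abs_mul]; exact le_abs_self _
    _ ≤ (|ρ x| + |κ x|) * (v x ^ 2 + y x ^ 2) := by
      gcongr
      · exact abs_sub _ _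
      · exact abs_le.2 ⟨by nlinarith [sq_nonneg (v x + y x)], two_mul_le_add_sq _ _⟩

lemma eq_zero_of_le (hab : a ≤ b) (h : IsSLSolution ρ κ (Icc a b) v y)
    (hρ : ContinuousOn ρ (Icc a b)) (hκ : ContinuousOn κ (Icc a b)) (hv : v a = 0)
    (hy : y a = 0) : v b = 0 := by
  have := h.sq_add_sq_le hab hρ hκ
  rw [hv, hy] at this
  nlinarith [sq_nonneg (v b), sq_nonneg (y b)]

lemma eq_zero (h : IsSLSolution ρ κ I v y) (hI : I.OrdConnected) (hρ : ContinuousOn ρ I)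
    (hκ : ContinuousOn κ I) (ha : a ∈ I) (hv : v a = 0) (hy : y a = 0) (hb : b ∈ I) :
    v b = 0 := by
  rcases le_total a b with hab | hba
  · have hsub := hI.out ha hb
    exact (h.mono hsub).eq_zero_of_le hab (hρ.mono hsub) (hκ.mono hsub) hv hy
  · have hmaps : MapsTo (fun x => a + b - x) (Icc b a) I := fun x hx =>
      hI.out hb ha ⟨by linarith [hx.2], by linarith [hx.1]⟩
    have := ((h.comp_const_sub (a + b)).mono hmaps).eq_zero_of_le hba
      (hρ.comp (by fun_prop) hmaps) (hκ.comp (by fun_prop) hmaps) (by simpa using hv)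
      (by simpa using hy)
    simpa using this

lemma exists_abs_le_of_intervalIntegrable (h : IsSLSolution ρ κ (Ico a b) v y)
    (hρ : ContinuousOn ρ (Ico a b)) (hκ : ContinuousOn κ (Ico a b))
    (hρi : IntervalIntegrable ρ MeasureTheory.volume a b)
    (hκi : IntervalIntegrable κ MeasureTheory.volume a b) :
    ∃ M, ∀ x ∈ Ico a b, |v x| ≤ M := by
  refine ⟨√((v a ^ 2 + y a ^ 2) * exp (∫ x in a..b, (|ρ x| + |κ x|))), fun x hx =>
    abs_le_sqrt ?_⟩
  have hsub : Icc a x ⊆ Ico a b := Icc_subset_Ico_right hx.2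
  calc v x ^ 2 ≤ v x ^ 2 + y x ^ 2 := le_add_of_nonneg_right (sq_nonneg _)
    _ ≤ (v a ^ 2 + y a ^ 2) * exp (∫ x in a..x, (|ρ x| + |κ x|)) :=
      (h.mono hsub).sq_add_sq_le hx.1 (hρ.mono hsub) (hκ.mono hsub)
    _ ≤ _ := by
      gcongr
      exact intervalIntegral.integral_mono_interval le_rfl hx.1 hx.2.le
        (Eventually.of_forall fun x => by positivity) (hρi.abs.add hκi.abs)

end IsSLSolution

section PowerSeries

/-- The value at `t` of the power series with coefficients `a`. -/
noncomputable def powSum (a : ℕ → ℝ) (t : ℝ) : ℝ := ∑' k, a k * t ^ k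

/-- The coefficients of the termwise derivative of a power series. -/
def derivCoeff (a : ℕ → ℝ) (k : ℕ) : ℝ := (k + 1) * a (k + 1)

/-- The coefficients of a power series multiplied by its variable. -/
def shiftCoeff (a : ℕ → ℝ) : ℕ → ℝ
  | 0 => 0
  | k + 1 => a k

/-- The power series with coefficients `a p`, `p ∈ K`, have radius of convergence at least `R`,
uniformly in `p ∈ K`. -/
def HasUniformRadius {ι : Type*} (a : ι → ℕ → ℝ) (K : Set ι) (R : ℝ) : Prop :=
  ∀ r : ℝ, 0 < r → r < R → ∃ C : ℝ, ∀ p ∈ K, ∀ k, |a p k| * r ^ k ≤ C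

namespace HasUniformRadius

variable {ι : Type*} {a : ι → ℕ → ℝ} {K : Set ι} {R t : ℝ} {p : ι}

lemma deriv (h : HasUniformRadius a K R) : HasUniformRadius (fun p => derivCoeff (a p)) K R := by
  intro r hr hrR
  obtain ⟨q, hrq, hqR⟩ := exists_between hrR
  have hq : 0 < q := hr.trans hrq
  obtain ⟨C, hC⟩ := h q hq hqR
  have hlim : Tendsto (fun k : ℕ => (k : ℝ) ^ 1 * (r / q) ^ k) atTop (𝓝 0) :=
    tendsto_pow_const_mul_const_pow_of_abs_lt_one 1 (by
      rwa [abs_of_pos (by positivity), div_lt_one hq])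
  obtain ⟨B, hB⟩ := hlim.bddAbove_range
  refine ⟨C * (B / r), fun p hp k => ?_⟩
  have hCk := hC p hp (k + 1)
  have hBk : ((k + 1 : ℕ) : ℝ) ^ 1 * (r / q) ^ (k + 1) ≤ B := hB ⟨k + 1, rfl⟩
  have hC0 : 0 ≤ C := le_trans (by positivity) hCk
  calc |derivCoeff (a p) k| * r ^ k
      = (|a p (k + 1)| * q ^ (k + 1)) * ((((k + 1 : ℕ) : ℝ) ^ 1 * (r / q) ^ (k + 1)) / r) := by
        rw [derivCoeff, abs_mul, abs_of_nonneg (by positivity : (0 : ℝ) ≤ k + 1)]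
        push_cast
        rw [div_pow]
        field_simp
        ring
    _ ≤ C * (B / r) := by gcongr

lemma exists_summable_bound (h : HasUniformRadius a K R) {r : ℝ} (hr : 0 < r) (hrR : r < R) :
    ∃ b : ℕ → ℝ, Summable b ∧ ∀ p ∈ K, ∀ t : ℝ, |t| ≤ r → ∀ k, ‖a p k * t ^ k‖ ≤ b k := by
  obtain ⟨q, hrq, hqR⟩ := exists_between hrR
  have hq : 0 < q := hr.trans hrq
  obtain ⟨C, hC⟩ := h q hq hqR
  refine ⟨fun k => C * (r / q) ^ k, (summable_geometric_of_lt_one (by positivity)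
    ((div_lt_one hq).2 hrq)).mul_left C, fun p hp t ht k => ?_⟩
  have hCk := hC p hp k
  calc ‖a p k * t ^ k‖ = |a p k| * |t| ^ k := by rw [norm_eq_abs, abs_mul, abs_pow]
    _ ≤ |a p k| * r ^ k := by gcongr
    _ = (|a p k| * q ^ k) * (r / q) ^ k := by rw [div_pow]; field_simp
    _ ≤ C * (r / q) ^ k := by gcongr

lemma hasSum (h : HasUniformRadius a K R) (hp : p ∈ K) (ht : |t| < R) :
    HasSum (fun k => a p k * t ^ k) (powSum (a p) t) := by
  obtain ⟨r, htr, hrR⟩ := exists_between ht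
  obtain ⟨b, hb, hab⟩ := h.exists_summable_bound ((abs_nonneg t).trans_lt htr) hrR
  exact (Summable.of_norm_bounded hb (hab p hp t htr.le)).hasSum

lemma hasDerivAt (h : HasUniformRadius a K R) (hp : p ∈ K) (ht : |t| < R) :
    HasDerivAt (powSum (a p)) (powSum (derivCoeff (a p)) t) t := by
  obtain ⟨r, htr, hrR⟩ := exists_between ht
  have hr : 0 < r := (abs_nonneg t).trans_lt htr
  obtain ⟨b, hb, hab⟩ := h.deriv.exists_summable_bound hr hrR
  have htail : HasDerivAt (fun z => ∑' k, a p (k + 1) * z ^ (k + 1))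
      (∑' k, derivCoeff (a p) k * t ^ k) t := by
    refine hasDerivAt_tsum_of_isPreconnected (g := fun k z => a p (k + 1) * z ^ (k + 1))
      (g' := fun k z => derivCoeff (a p) k * z ^ k) (t := Ioo (-r) r) (y₀ := 0) hb isOpen_Ioo
      isPreconnected_Ioo (fun k z _ => ?_) (fun k z hz => ?_) ⟨by linarith, hr⟩ ?_ (abs_lt.1 htr)
    · refine ((hasDerivAt_pow (k + 1) z).const_mul (a p (k + 1))).congr_deriv ?_
      rw [derivCoeff]
      push_cast
      ring
    · exact hab p hp z (abs_le.2 ⟨hz.1.le, hz.2.le⟩) k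
    · simp [summable_zero]
  refine (htail.const_add (a p 0)).congr_of_eventuallyEq ?_
  filter_upwards [(continuous_abs.tendsto t).eventually_lt_const ht] with z hz
  rw [powSum, (h.hasSum hp hz).summable.tsum_eq_zero_add, pow_zero, mul_one]

lemma continuousAt [TopologicalSpace ι] (h : HasUniformRadius a K R) (hK : K ∈ 𝓝 p)
    (ha : ∀ k, Continuous fun p => a p k) (ht : |t| < R) :
    ContinuousAt (fun z : ι × ℝ => powSum (a z.1) z.2) (p, t) := by
  obtain ⟨r, htr, hrR⟩ := exists_between ht
  obtain ⟨b, hb, hab⟩ := h.exists_summable_bound ((abs_nonneg t).trans_lt htr) hrR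
  have hcont : ContinuousOn (fun z : ι × ℝ => powSum (a z.1) z.2) (K ×ˢ Icc (-r) r) :=
    continuousOn_tsum (fun k => (((ha k).comp continuous_fst).mul
      (continuous_snd.pow k)).continuousOn) hb fun k z hz => hab z.1 hz.1 z.2 (abs_le.2 hz.2) k
  exact hcont.continuousAt (prod_mem_nhds hK (Icc_mem_nhds (abs_lt.1 htr).1 (abs_lt.1 htr).2))

end HasUniformRadius

lemma hasSum_shiftCoeff {a : ℕ → ℝ} {t u : ℝ} (h : HasSum (fun k => a k * t ^ k) u) :
    HasSum (fun k => shiftCoeff a k * t ^ k) (t * u) := by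
  rw [← hasSum_nat_add_iff' 1]
  simp only [Finset.range_one, Finset.sum_singleton, shiftCoeff, zero_mul, sub_zero]
  exact (h.mul_left t).congr_fun fun k => by ring

lemma powSum_zero (a : ℕ → ℝ) : powSum a 0 = a 0 := by
  rw [powSum, tsum_eq_single 0 fun k hk => by rw [zero_pow hk, mul_zero], pow_zero, mul_one]

lemma continuous_powSum_of_forall_lt_eq_zero {a : ℕ → ℝ} {n : ℕ} (ha : ∀ k, n < k → a k = 0) :
    Continuous (powSum a) := by
  have hsum : powSum a = fun t => ∑ k ∈ Finset.range (n + 1), a k * t ^ k := by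
    funext t
    refine tsum_eq_sum fun k hk => ?_
    rw [ha k (by simpa using hk), zero_mul]
  rw [hsum]
  fun_prop

lemma abs_mul_pow_le_of_recurrence {b A B C : ℕ → ℝ} {r D : ℝ} {N : ℕ} (hr : 0 ≤ r)
    (hrec : ∀ k, b (k + 3) = A k * b (k + 2) + B k * b (k + 1) + C k * b k)
    (hle : ∀ k, N ≤ k → |A k| * r + |B k| * r ^ 2 + |C k| * r ^ 3 ≤ 1)
    (hD : ∀ k < N + 3, |b k| * r ^ k ≤ D) (k : ℕ) : |b k| * r ^ k ≤ D := by
  induction k using Nat.strong_induction_on with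
  | _ k ih =>
    rcases lt_or_ge k (N + 3) with hk | hk
    · exact hD k hk
    · obtain ⟨m, rfl⟩ : ∃ m, k = m + 3 := ⟨k - 3, by omega⟩
      have h0 := ih m (by omega)
      have h1 := ih (m + 1) (by omega)
      have h2 := ih (m + 2) (by omega)
      have hD0 : 0 ≤ D := le_trans (by positivity) h0
      calc |b (m + 3)| * r ^ (m + 3)
          ≤ (|A m| * |b (m + 2)| + |B m| * |b (m + 1)| + |C m| * |b m|) * r ^ (m + 3) := by
            rw [hrec]
            gcongr
            simpa only [abs_mul] using abs_add_three (A m * b (m + 2)) (B m * b (m + 1)) (C m * b m)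
        _ = |A m| * r * (|b (m + 2)| * r ^ (m + 2)) + |B m| * r ^ 2 * (|b (m + 1)| * r ^ (m + 1))
            + |C m| * r ^ 3 * (|b m| * r ^ m) := by ring
        _ ≤ |A m| * r * D + |B m| * r ^ 2 * D + |C m| * r ^ 3 * D := by gcongr
        _ = (|A m| * r + |B m| * r ^ 2 + |C m| * r ^ 3) * D := by ring
        _ ≤ D := mul_le_of_le_one_left hD0 (hle m (by omega))

end PowerSeries

section RegularCoefficients

/-- The coefficients, padded by two leading zeros so that one recurrence holds throughout, of the
power series in `1 - x` of the solution regular at `x = 1`, for the parameters `p = (χ, c²)`. -/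
noncomputable def paddedRegCoeff (α : ℝ) (p : ℝ × ℝ) : ℕ → ℝ
  | 0 => 0
  | 1 => 0
  | 2 => 1
  | k + 3 => (k * (k + 2 * α + 1) - p.1 + p.2) / (2 * (k + 1) * (k + α + 1))
        * paddedRegCoeff α p (k + 2)
      + -2 * p.2 / (2 * (k + 1) * (k + α + 1)) * paddedRegCoeff α p (k + 1)
      + p.2 / (2 * (k + 1) * (k + α + 1)) * paddedRegCoeff α p k

/-- The coefficients of the power series in `1 - x` of the solution that is regular at `x = 1`,
for the parameters `p = (χ, c²)`. -/
noncomputable def regCoeff (α : ℝ) (p : ℝ × ℝ) (k : ℕ) : ℝ := paddedRegCoeff α p (k + 2)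

variable {α : ℝ}

lemma paddedRegCoeff_recurrence (hα : -1 < α) (p : ℝ × ℝ) (k : ℕ) :
    2 * (k + 1) * (k + α + 1) * paddedRegCoeff α p (k + 3) =
      (k * (k + 2 * α + 1) - p.1 + p.2) * paddedRegCoeff α p (k + 2)
      - 2 * p.2 * paddedRegCoeff α p (k + 1) + p.2 * paddedRegCoeff α p k := by
  have hk : (k : ℝ) + α + 1 ≠ 0 := by linarith [(Nat.cast_nonneg k : (0 : ℝ) ≤ k)]
  rw [paddedRegCoeff]
  field_simp
  ring

lemma continuous_paddedRegCoeff (α : ℝ) (k : ℕ) : Continuous fun p => paddedRegCoeff α p k := by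
  induction k using Nat.strong_induction_on with
  | _ k ih =>
    match k, ih with
    | 0, _ | 1, _ | 2, _ => simpa only [paddedRegCoeff] using continuous_const
    | k + 3, ih =>
      have h0 := ih k (by omega)
      have h1 := ih (k + 1) (by omega)
      have h2 := ih (k + 2) (by omega)
      simp only [paddedRegCoeff]
      fun_prop

lemma continuous_regCoeff (α : ℝ) (k : ℕ) : Continuous fun p => regCoeff α p k :=
  continuous_paddedRegCoeff α (k + 2)

lemma eventually_recurrence_polynomial_le (α M : ℝ) {r : ℝ} (hr2 : r < 2) :
    ∀ᶠ x : ℝ in atTop, (x * (x + 2 * α + 1) + 2 * M) * r + 2 * M * r ^ 2 + M * r ^ 3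
      ≤ 2 * (x + 1) * (x + α + 1) := by
  have hlin : Tendsto (fun x : ℝ => (2 - r) * x + (2 * α + 4 - (2 * α + 1) * r)) atTop atTop :=
    tendsto_atTop_add_const_right _ _ (tendsto_id.const_mul_atTop (by linarith))
  filter_upwards [(tendsto_id.atTop_mul_atTop₀ hlin).eventually_ge_atTop
    (2 * M * r + 2 * M * r ^ 2 + M * r ^ 3 - 2 * (α + 1))] with x hx
  simp only [id] at hx
  linarith

lemma abs_recurrenceCoeff_sum_le (hα : -1 < α) {p : ℝ × ℝ} {M r : ℝ} (hp : ‖p‖ ≤ M) (hr : 0 ≤ r)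
    {k : ℕ} (hk : 1 ≤ k)
    (hle : ((k : ℝ) * (k + 2 * α + 1) + 2 * M) * r + 2 * M * r ^ 2 + M * r ^ 3
      ≤ 2 * (k + 1) * (k + α + 1)) :
    |(k * (k + 2 * α + 1) - p.1 + p.2) / (2 * (k + 1) * (k + α + 1))| * r
      + |-2 * p.2 / (2 * (k + 1) * (k + α + 1))| * r ^ 2
      + |p.2 / (2 * (k + 1) * (k + α + 1))| * r ^ 3 ≤ 1 := by
  have hk1 : (1 : ℝ) ≤ k := by exact_mod_cast hk
  have hχ : |p.1| ≤ M := (norm_fst_le p).trans hp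
  have hs : |p.2| ≤ M := (norm_snd_le p).trans hp
  have hden : (0 : ℝ) < 2 * (k + 1) * (k + α + 1) := mul_pos (by positivity) (by linarith)
  have hlead : |(k : ℝ) * (k + 2 * α + 1) - p.1 + p.2| ≤ k * (k + 2 * α + 1) + 2 * M := by
    have : (0 : ℝ) ≤ k * (k + 2 * α + 1) := mul_nonneg (by linarith) (by linarith)
    rw [abs_le] at hχ hs ⊢
    constructor <;> linarith [hχ.1, hχ.2, hs.1, hs.2]
  calc _ = (|(k : ℝ) * (k + 2 * α + 1) - p.1 + p.2| * r + 2 * |p.2| * r ^ 2 + |p.2| * r ^ 3)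
        / (2 * (k + 1) * (k + α + 1)) := by
        simp only [abs_div, abs_mul, abs_neg, abs_two, abs_of_pos hden]
        ring
    _ ≤ ((k * (k + 2 * α + 1) + 2 * M) * r + 2 * M * r ^ 2 + M * r ^ 3)
        / (2 * (k + 1) * (k + α + 1)) := by gcongr
    _ ≤ 1 := (div_le_one hden).2 hle

lemma hasUniformRadius_regCoeff (hα : -1 < α) (M : ℝ) :
    HasUniformRadius (regCoeff α) (Metric.closedBall 0 M) 2 := by
  intro r hr hr2
  obtain ⟨N, hN⟩ := ((tendsto_natCast_atTop_atTop.eventually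
    (eventually_recurrence_polynomial_le α M hr2)).and
    (eventually_ge_atTop 1)).exists_forall_of_atTop
  have hinit (k : ℕ) : ∃ C, ∀ p ∈ Metric.closedBall (0 : ℝ × ℝ) M,
      |paddedRegCoeff α p k| * r ^ k ≤ C := by
    obtain ⟨C, hC⟩ := (isCompact_closedBall (0 : ℝ × ℝ) M).exists_bound_of_continuousOn
      (continuous_paddedRegCoeff α k).continuousOn
    exact ⟨C * r ^ k, fun p hp => by gcongr; exact hC p hp⟩
  choose C hC using hinit
  refine ⟨(∑ k ∈ Finset.range (N + 3), |C k|) / r ^ 2, fun p hp k => ?_⟩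
  rw [le_div_iff₀ (by positivity), mul_assoc, ← pow_add]
  refine abs_mul_pow_le_of_recurrence hr.le (fun k => by rw [paddedRegCoeff])
    (fun k hk => abs_recurrenceCoeff_sum_le hα (mem_closedBall_zero_iff.1 hp) hr.le
      (hN k hk).2 (hN k hk).1) (fun k hk => ?_) (k + 2)
  exact ((hC k p hp).trans (le_abs_self _)).trans
    (Finset.single_le_sum (fun k _ => abs_nonneg (C k)) (Finset.mem_range.2 hk))

lemma hasSum_regCoeff_ode (hα : -1 < α) (p : ℝ × ℝ) {t u u' u'' : ℝ}
    (hu : HasSum (fun k => regCoeff α p k * t ^ k) u)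
    (hu' : HasSum (fun k => derivCoeff (regCoeff α p) k * t ^ k) u')
    (hu'' : HasSum (fun k => derivCoeff (derivCoeff (regCoeff α p)) k * t ^ k) u'') :
    t * (2 - t) * u'' + 2 * (α + 1) * (1 - t) * u' + (p.1 - p.2 * (1 - t) ^ 2) * u = 0 := by
  have htu := hasSum_shiftCoeff hu
  have htu'' := hasSum_shiftCoeff hu''
  have hode := ((((((htu''.mul_left 2).sub (hasSum_shiftCoeff htu'')).add
    (hu'.mul_left (2 * (α + 1)))).sub ((hasSum_shiftCoeff hu').mul_left (2 * (α + 1)))).add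
    (hu.mul_left (p.1 - p.2))).add (htu.mul_left (2 * p.2))).sub
    ((hasSum_shiftCoeff htu).mul_left p.2)
  have := hode.unique (hasSum_zero.congr_fun fun k => ?_)
  · linear_combination this
  · have hzero : paddedRegCoeff α p 0 = 0 := by rw [paddedRegCoeff]
    have hone : paddedRegCoeff α p 1 = 0 := by rw [paddedRegCoeff]
    match k with
    | 0 =>
      have hrec := paddedRegCoeff_recurrence hα p 0
      simp only [shiftCoeff, derivCoeff, regCoeff, zero_add, hzero, hone] at hrec ⊢
      push_cast at hrec ⊢
      linear_combination hrec
    | 1 =>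
      have hrec := paddedRegCoeff_recurrence hα p 1
      simp only [shiftCoeff, derivCoeff, regCoeff, hone] at hrec ⊢
      push_cast at hrec ⊢
      linear_combination t * hrec
    | k + 2 =>
      have hrec := paddedRegCoeff_recurrence hα p (k + 2)
      simp only [shiftCoeff, derivCoeff, regCoeff] at hrec ⊢
      push_cast at hrec ⊢
      linear_combination t ^ (k + 2) * hrec

end RegularCoefficients

/-- The weight `(1 - x²)^β`. -/
noncomputable def gegenbauerWeight (β x : ℝ) : ℝ := (1 - x ^ 2) ^ β

section Weight

variable {β x : ℝ}

lemma one_sub_sq_pos (hx : x ∈ Ioo (-1 : ℝ) 1) : 0 < 1 - x ^ 2 := by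
  nlinarith [hx.1, hx.2]

lemma gegenbauerWeight_pos (hx : x ∈ Ioo (-1 : ℝ) 1) : 0 < gegenbauerWeight β x :=
  rpow_pos_of_pos (one_sub_sq_pos hx) β

lemma gegenbauerWeight_zero (β : ℝ) : gegenbauerWeight β 0 = 1 := by
  simp [gegenbauerWeight]

lemma gegenbauerWeight_one (hβ : β ≠ 0) : gegenbauerWeight β 1 = 0 := by
  simp [gegenbauerWeight, zero_rpow hβ]

lemma gegenbauerWeight_neg (β x : ℝ) : gegenbauerWeight β (-x) = gegenbauerWeight β x := by
  simp only [gegenbauerWeight, neg_sq]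

lemma gegenbauerWeight_add (β γ : ℝ) (hx : x ∈ Ioo (-1 : ℝ) 1) :
    gegenbauerWeight (β + γ) x = gegenbauerWeight β x * gegenbauerWeight γ x :=
  rpow_add (one_sub_sq_pos hx) β γ

lemma gegenbauerWeight_exponent_one (x : ℝ) : gegenbauerWeight 1 x = 1 - x ^ 2 := rpow_one _

lemma gegenbauerWeight_exponent_neg (β : ℝ) (hx : x ∈ Ioo (-1 : ℝ) 1) :
    gegenbauerWeight (-β) x = (gegenbauerWeight β x)⁻¹ :=
  rpow_neg (one_sub_sq_pos hx).le β

lemma hasDerivAt_gegenbauerWeight (β : ℝ) (hx : x ∈ Ioo (-1 : ℝ) 1) :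
    HasDerivAt (gegenbauerWeight β) (-(2 * β * x * gegenbauerWeight (β - 1) x)) x := by
  refine (((hasDerivAt_pow 2 x).const_sub 1).rpow_const (p := β)
    (Or.inl (one_sub_sq_pos hx).ne')).congr_deriv ?_
  simp only [gegenbauerWeight]
  push_cast
  ring

lemma continuousOn_gegenbauerWeight (β : ℝ) :
    ContinuousOn (gegenbauerWeight β) (Ioo (-1) 1) := fun _ hx =>
  (hasDerivAt_gegenbauerWeight β hx).continuousAt.continuousWithinAt

lemma continuous_gegenbauerWeight (hβ : 0 ≤ β) : Continuous (gegenbauerWeight β) :=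
  Continuous.rpow_const (by fun_prop) fun _ => Or.inr hβ

lemma intervalIntegrable_gegenbauerWeight (hβ : -1 < β) :
    IntervalIntegrable (gegenbauerWeight β) MeasureTheory.volume 0 1 := by
  have hsing : IntervalIntegrable (fun x : ℝ => (1 - x) ^ β) MeasureTheory.volume 0 1 := by
    simpa using ((intervalIntegral.intervalIntegrable_rpow' hβ (a := 0) (b := 1)).comp_sub_left
      1).symm
  have hreg : ContinuousOn (fun x : ℝ => (1 + x) ^ β) (uIcc 0 1) := by
    rw [uIcc_of_le zero_le_one]
    exact ContinuousOn.rpow_const (by fun_prop) fun x hx => Or.inl (by linarith [hx.1])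
  refine (hsing.mul_continuousOn hreg).congr fun x hx => ?_
  rw [uIoc_of_le zero_le_one] at hx
  rw [gegenbauerWeight, ← mul_rpow (by linarith [hx.2]) (by linarith [hx.1])]
  ring_nf

end Weight

/-- `v`, with flux `y = (1 - x²)^{α+1} v'`, solves the generalized prolate spheroidal wave
equation on `(-1, 1)` for the parameters `p = (χ, c²)`. -/
abbrev IsGPSWFSolution (α : ℝ) (p : ℝ × ℝ) (v y : ℝ → ℝ) : Prop :=
  IsSLSolution (gegenbauerWeight (-(α + 1)))
    (fun x => gegenbauerWeight α x * (p.1 - p.2 * x ^ 2)) (Ioo (-1) 1) v y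

namespace IsGPSWFSolution

variable {α : ℝ} {p : ℝ × ℝ} {v v' v'' y : ℝ → ℝ}

lemma of_ode (hv : ∀ x ∈ Ioo (-1 : ℝ) 1, HasDerivAt v (v' x) x)
    (hv' : ∀ x ∈ Ioo (-1 : ℝ) 1, HasDerivAt v' (v'' x) x)
    (hode : ∀ x ∈ Ioo (-1 : ℝ) 1,
      (1 - x ^ 2) * v'' x - 2 * (α + 1) * x * v' x + (p.1 - p.2 * x ^ 2) * v x = 0) :
    IsGPSWFSolution α p v fun x => gegenbauerWeight (α + 1) x * v' x where
  hasDerivAt x hx := (hv x hx).congr_deriv <| by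
    rw [gegenbauerWeight_exponent_neg _ hx, inv_mul_cancel_left₀ (gegenbauerWeight_pos hx).ne']
  hasDerivAt_flux x hx := by
    refine ((hasDerivAt_gegenbauerWeight (α + 1) hx).mul (hv' x hx)).congr_deriv ?_
    rw [add_sub_cancel_right, gegenbauerWeight_add α 1 hx, gegenbauerWeight_exponent_one]
    linear_combination gegenbauerWeight α x * hode x hx

lemma hasDerivAt_deriv (h : IsGPSWFSolution α p v y) {x : ℝ} (hx : x ∈ Ioo (-1 : ℝ) 1) :
    HasDerivAt (deriv v)
      ((2 * (α + 1) * x * deriv v x - (p.1 - p.2 * x ^ 2) * v x) / (1 - x ^ 2)) x := by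
  have hd : deriv v =ᶠ[𝓝 x] fun x => gegenbauerWeight (-(α + 1)) x * y x := by
    filter_upwards [isOpen_Ioo.mem_nhds hx] with z hz using (h.hasDerivAt z hz).deriv
  refine (((hasDerivAt_gegenbauerWeight _ hx).mul
    (h.hasDerivAt_flux x hx)).congr_of_eventuallyEq hd).congr_deriv ?_
  have hpos := one_sub_sq_pos hx
  have hα : gegenbauerWeight α x ≠ 0 := (gegenbauerWeight_pos hx).ne'
  rw [(h.hasDerivAt x hx).deriv, eq_div_iff hpos.ne', sub_eq_add_neg (-(α + 1)),
    gegenbauerWeight_add _ (-1) hx, gegenbauerWeight_exponent_neg 1 hx,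
    gegenbauerWeight_exponent_neg (α + 1) hx, gegenbauerWeight_add α 1 hx,
    gegenbauerWeight_exponent_one]
  field_simp
  ring

lemma continuousOn_coeff (α : ℝ) (p : ℝ × ℝ) :
    ContinuousOn (fun x => gegenbauerWeight α x * (p.1 - p.2 * x ^ 2)) (Ioo (-1) 1) :=
  (continuousOn_gegenbauerWeight α).mul (by fun_prop)

lemma eq_zero (h : IsGPSWFSolution α p v y) (hv : v 0 = 0) (hy : y 0 = 0) {x : ℝ}
    (hx : x ∈ Ioo (-1 : ℝ) 1) : v x = 0 :=
  IsSLSolution.eq_zero h ordConnected_Ioo (continuousOn_gegenbauerWeight _)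
    (continuousOn_coeff α p) (by norm_num : (0 : ℝ) ∈ Ioo (-1 : ℝ) 1) hv hy hx

lemma reflect (h : IsGPSWFSolution α p v y) :
    IsGPSWFSolution α p (fun x => v (-x)) (fun x => -y (-x)) := by
  have hr := (h.comp_const_sub 0).mono (J := Ioo (-1 : ℝ) 1) fun x hx =>
    ⟨by linarith [hx.2], by linarith [hx.1]⟩
  simpa only [zero_sub, gegenbauerWeight_neg, neg_sq] using hr

lemma exists_abs_le_Ico (h : IsGPSWFSolution α p v y) (hα : -1 < α) (hα0 : α < 0) :
    ∃ M, ∀ x ∈ Ico (0 : ℝ) 1, |v x| ≤ M := by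
  have hsub : Ico (0 : ℝ) 1 ⊆ Ioo (-1) 1 := Ico_subset_Ioo_left (by norm_num)
  exact (h.mono hsub).exists_abs_le_of_intervalIntegrable
    ((continuousOn_gegenbauerWeight _).mono hsub) ((continuousOn_coeff α p).mono hsub)
    (intervalIntegrable_gegenbauerWeight (by linarith))
    ((intervalIntegrable_gegenbauerWeight hα).mul_continuousOn (by fun_prop))

lemma exists_abs_le (h : IsGPSWFSolution α p v y) (hα : -1 < α) (hα0 : α < 0) :
    ∃ M, ∀ x ∈ Ioo (-1 : ℝ) 1, |v x| ≤ M := by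
  obtain ⟨M, hM⟩ := h.exists_abs_le_Ico hα hα0
  obtain ⟨N, hN⟩ := h.reflect.exists_abs_le_Ico hα hα0
  refine ⟨max M N, fun x hx => ?_⟩
  rcases le_total 0 x with h0 | h0
  · exact (hM x ⟨h0, hx.2⟩).trans (le_max_left _ _)
  · simpa using (hN (-x) ⟨by linarith, by linarith [hx.1]⟩).trans (le_max_right _ _)

end IsGPSWFSolution

/-- There is a nontrivial bounded solution of the generalized prolate spheroidal wave equation for
the parameters `p = (χ, c²)`. -/
def HasBoundedSolution (α : ℝ) (p : ℝ × ℝ) : Prop :=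
  ∃ v y : ℝ → ℝ, IsGPSWFSolution α p v y ∧ (∃ x ∈ Ioo (-1 : ℝ) 1, v x ≠ 0) ∧
    ∃ M, ∀ x ∈ Ioo (-1 : ℝ) 1, |v x| ≤ M

lemma isGPSWFEigenvalue_iff_hasBoundedSolution {c α χ : ℝ} :
    IsGPSWFEigenvalue c α χ ↔ HasBoundedSolution α (χ, c ^ 2) := by
  constructor
  · rintro ⟨ψ, hne, hd, hdd, hbdd, hode⟩
    exact ⟨ψ, _, .of_ode (fun x hx => (hd x hx).hasDerivAt) (fun x hx => (hdd x hx).hasDerivAt)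
      hode, hne, hbdd⟩
  · rintro ⟨v, y, h, hne, hbdd⟩
    refine ⟨v, hne, fun x hx => (h.hasDerivAt x hx).differentiableAt,
      fun x hx => (h.hasDerivAt_deriv hx).differentiableAt, hbdd, fun x hx => ?_⟩
    rw [(h.hasDerivAt_deriv hx).deriv, mul_div_cancel₀ _ (one_sub_sq_pos hx).ne']
    ring

/-- The solution that is regular at `x = 1`, normalized by the value `1` there. -/
noncomputable def regSol (α : ℝ) (p : ℝ × ℝ) (x : ℝ) : ℝ := powSum (regCoeff α p) (1 - x)

/-- The flux `(1 - x²)^{α+1} u'` of the solution `u` that is regular at `x = 1`. -/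
noncomputable def regFlux (α : ℝ) (p : ℝ × ℝ) (x : ℝ) : ℝ :=
  gegenbauerWeight (α + 1) x * -powSum (derivCoeff (regCoeff α p)) (1 - x)

section RegularSolution

variable {α : ℝ}

lemma isGPSWFSolution_regSol (hα : -1 < α) (p : ℝ × ℝ) :
    IsGPSWFSolution α p (regSol α p) (regFlux α p) := by
  have hR := hasUniformRadius_regCoeff hα ‖p‖
  have hp : p ∈ Metric.closedBall (0 : ℝ × ℝ) ‖p‖ := mem_closedBall_zero_iff.2 le_rfl
  have ht (x : ℝ) (hx : x ∈ Ioo (-1 : ℝ) 1) : |1 - x| < 2 :=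
    abs_lt.2 ⟨by linarith [hx.2], by linarith [hx.1]⟩
  refine .of_ode (v'' := fun x => powSum (derivCoeff (derivCoeff (regCoeff α p))) (1 - x))
    (fun x hx => (hR.hasDerivAt hp (ht x hx)).comp_const_sub 1 x)
    (fun x hx => ((hR.deriv.hasDerivAt hp (ht x hx)).comp_const_sub 1 x).neg.congr_deriv
      (neg_neg _)) fun x hx => ?_
  have := hasSum_regCoeff_ode hα p (hR.hasSum hp (ht x hx)) (hR.deriv.hasSum hp (ht x hx))
    (hR.deriv.deriv.hasSum hp (ht x hx))
  rw [regSol]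
  linear_combination this

lemma continuousAt_regSol (hα : -1 < α) (p : ℝ × ℝ) {x : ℝ} (hx : |1 - x| < 2) :
    ContinuousAt (fun z : (ℝ × ℝ) × ℝ => regSol α z.1 z.2) (p, x) := by
  have hK : Metric.closedBall (0 : ℝ × ℝ) (‖p‖ + 1) ∈ 𝓝 p :=
    Metric.closedBall_mem_nhds_of_mem (by simp)
  exact ((hasUniformRadius_regCoeff hα _).continuousAt hK (continuous_regCoeff α) hx).comp
    (f := fun z : (ℝ × ℝ) × ℝ => (z.1, 1 - z.2)) (x := (p, x)) (by fun_prop)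

lemma continuousAt_regFlux (hα : -1 < α) (p : ℝ × ℝ) {x : ℝ} (hx : |1 - x| < 2) :
    ContinuousAt (fun z : (ℝ × ℝ) × ℝ => regFlux α z.1 z.2) (p, x) := by
  have hK : Metric.closedBall (0 : ℝ × ℝ) (‖p‖ + 1) ∈ 𝓝 p :=
    Metric.closedBall_mem_nhds_of_mem (by simp)
  have hw : Continuous (gegenbauerWeight (α + 1)) := continuous_gegenbauerWeight (by linarith)
  exact (hw.comp continuous_snd).continuousAt.mul
    (((hasUniformRadius_regCoeff hα _).deriv.continuousAt hK
      (fun k => (continuous_regCoeff α (k + 1)).const_mul _) hx).comp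
      (f := fun z : (ℝ × ℝ) × ℝ => (z.1, 1 - z.2)) (x := (p, x)) (by fun_prop)).neg

lemma continuous_regSol_zero (hα : -1 < α) : Continuous fun p => regSol α p 0 :=
  continuous_iff_continuousAt.2 fun p =>
    (continuousAt_regSol hα p (by norm_num)).comp (f := fun p => (p, (0 : ℝ))) (by fun_prop)

lemma continuous_regFlux_zero (hα : -1 < α) : Continuous fun p => regFlux α p 0 :=
  continuous_iff_continuousAt.2 fun p =>
    (continuousAt_regFlux hα p (by norm_num)).comp (f := fun p => (p, (0 : ℝ))) (by fun_prop)

lemma continuousOn_regSol (hα : -1 < α) (p : ℝ × ℝ) : ContinuousOn (regSol α p) (Icc 0 1) :=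
  fun x hx => ((continuousAt_regSol hα p (abs_lt.2 ⟨by linarith [hx.2], by linarith [hx.1]⟩)).comp
    (f := fun x => (p, x)) (by fun_prop)).continuousWithinAt

lemma continuousOn_regFlux (hα : -1 < α) (p : ℝ × ℝ) : ContinuousOn (regFlux α p) (Icc 0 1) :=
  fun x hx => ((continuousAt_regFlux hα p (abs_lt.2 ⟨by linarith [hx.2], by linarith [hx.1]⟩)).comp
    (f := fun x => (p, x)) (by fun_prop)).continuousWithinAt

lemma regSol_one (α : ℝ) (p : ℝ × ℝ) : regSol α p 1 = 1 := by
  rw [regSol, sub_self, powSum_zero, regCoeff, paddedRegCoeff]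

lemma regFlux_one (hα : -1 < α) (p : ℝ × ℝ) : regFlux α p 1 = 0 := by
  rw [regFlux, gegenbauerWeight_one (by linarith), zero_mul]

lemma exists_regSol_ne_zero (hα : -1 < α) (p : ℝ × ℝ) : ∃ x ∈ Ioo (0 : ℝ) 1, regSol α p x ≠ 0 := by
  by_contra! h
  have hcl : EqOn (regSol α p) 0 (Icc 0 1) := by
    have hzero : EqOn (regSol α p) 0 (Ioo 0 1) := h
    exact hzero.of_subset_closure (continuousOn_regSol hα p) continuousOn_const Ioo_subset_Icc_self
      (closure_Ioo zero_ne_one).ge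
  simpa [regSol_one] using hcl (right_mem_Icc.2 zero_le_one)

lemma regSol_zero_ne_zero_or_regFlux_zero_ne_zero (hα : -1 < α) (p : ℝ × ℝ) :
    regSol α p 0 ≠ 0 ∨ regFlux α p 0 ≠ 0 := by
  by_contra! h
  obtain ⟨x, hx, hne⟩ := exists_regSol_ne_zero hα p
  exact hne ((isGPSWFSolution_regSol hα p).eq_zero h.1 h.2 ⟨by linarith [hx.1], hx.2⟩)

end RegularSolution

section BoundedSolutions

variable {α : ℝ} {p : ℝ × ℝ}

lemma hasBoundedSolution_of_exists_abs_regSol_le (hα : -1 < α)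
    (h : ∃ M, ∀ x ∈ Ioo (-1 : ℝ) 1, |regSol α p x| ≤ M) : HasBoundedSolution α p := by
  obtain ⟨x, hx, hne⟩ := exists_regSol_ne_zero hα p
  exact ⟨_, _, isGPSWFSolution_regSol hα p, ⟨x, ⟨by linarith [hx.1], hx.2⟩, hne⟩, h⟩

lemma hasBoundedSolution_of_neg (hα : -1 < α) (hα0 : α < 0) (p : ℝ × ℝ) :
    HasBoundedSolution α p :=
  hasBoundedSolution_of_exists_abs_regSol_le hα
    ((isGPSWFSolution_regSol hα p).exists_abs_le hα hα0)

lemma one_div_le_gegenbauerWeight (hα : 0 ≤ α) {x : ℝ} (hx : x ∈ Ioo (-1 : ℝ) 1) :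
    1 / (2 * (1 - x)) ≤ gegenbauerWeight (-(α + 1)) x := by
  have hpos := one_sub_sq_pos hx
  rw [gegenbauerWeight_exponent_neg _ hx, ← one_div]
  refine one_div_le_one_div_of_le (gegenbauerWeight_pos hx) ?_
  calc gegenbauerWeight (α + 1) x ≤ gegenbauerWeight 1 x :=
        rpow_le_rpow_of_exponent_ge hpos (by nlinarith [sq_nonneg x]) (by linarith)
    _ = (1 + x) * (1 - x) := by rw [gegenbauerWeight_exponent_one]; ring
    _ ≤ 2 * (1 - x) := by nlinarith [hx.2]

lemma exists_regSol_mem_Icc (hα : -1 < α) (p : ℝ × ℝ) :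
    ∃ a ∈ Ico (0 : ℝ) 1, ∀ x ∈ Ioo a 1, regSol α p x ∈ Icc (1 / 2 : ℝ) 2 := by
  have hlim : Tendsto (regSol α p) (𝓝[<] 1) (𝓝 1) := by
    have := (continuousOn_regSol hα p).continuousWithinAt (right_mem_Icc.2 zero_le_one)
    rw [ContinuousWithinAt, regSol_one, nhdsWithin_Icc_eq_nhdsLE zero_lt_one] at this
    exact this.mono_left (nhdsWithin_mono _ Iio_subset_Iic_self)
  exact (mem_nhdsLT_iff_exists_mem_Ico_Ioo_subset zero_lt_one).1
    (hlim (Icc_mem_nhds (by norm_num) (by norm_num)))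

namespace IsGPSWFSolution

variable {v y : ℝ → ℝ} {M : ℝ}

-- If the Wronskian with the regular solution `u` were positive, `v / u` would have slope at least
-- a positive multiple of `1 / (1 - x)`, hence diverge logarithmically at `x = 1`.
lemma wronskian_regSol_nonpos (hα : 0 ≤ α) (h : IsGPSWFSolution α p v y)
    (hM : ∀ x ∈ Ioo (-1 : ℝ) 1, |v x| ≤ M) : regSol α p 0 * y 0 - regFlux α p 0 * v 0 ≤ 0 := by
  have hα' : -1 < α := by linarith
  have hu := isGPSWFSolution_regSol hα' p
  obtain ⟨a, ha, huI⟩ := exists_regSol_mem_Icc hα' p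
  set K := regSol α p 0 * y 0 - regFlux α p 0 * v 0 with hK
  by_contra! hK0
  have hsub : Ioo a 1 ⊆ Ioo (-1 : ℝ) 1 := Ioo_subset_Ioo_left (by linarith [ha.1])
  have hK8 : K / 8 ≤ 0 := by
    refine nonpos_of_div_sub_le_deriv (f := fun x => v x / regSol α p x)
      (f' := fun x => gegenbauerWeight (-(α + 1)) x * K / regSol α p x ^ 2) (M := 2 * M) ha.2
      (fun x hx => ?_) (fun x hx => ?_) fun x hx => ?_
    · have hW := hu.wronskian_eq h isOpen_Ioo isPreconnected_Ioo (a := 0)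
        (by norm_num) (hsub hx)
      refine ((h.hasDerivAt x (hsub hx)).div (hu.hasDerivAt x (hsub hx))
        (by linarith [(huI x hx).1])).congr_deriv ?_
      rw [hK, hW]
      ring
    · have hx1 : 0 < 1 - x := by linarith [hx.2]
      have hu0 : 0 < regSol α p x := by linarith [(huI x hx).1]
      calc K / 8 / (1 - x) = 1 / (2 * (1 - x)) * K / 2 ^ 2 := by field_simp; norm_num
        _ ≤ gegenbauerWeight (-(α + 1)) x * K / regSol α p x ^ 2 := by
          gcongr ?_ * _ / ?_ ^ 2
          · exact mul_nonneg (gegenbauerWeight_pos (hsub hx)).le hK0.le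
          · exact one_div_le_gegenbauerWeight hα (hsub hx)
          · exact (huI x hx).2
    · have hvM := hM x (hsub hx)
      rw [div_le_iff₀ (by linarith [(huI x hx).1])]
      nlinarith [le_abs_self (v x), abs_nonneg (v x), (huI x hx).1]
  linarith

lemma wronskian_regSol_eq_zero (hα : 0 ≤ α) (h : IsGPSWFSolution α p v y)
    (hM : ∀ x ∈ Ioo (-1 : ℝ) 1, |v x| ≤ M) : regSol α p 0 * y 0 - regFlux α p 0 * v 0 = 0 := by
  have hneg := wronskian_regSol_nonpos hα h.neg (M := M) fun x hx => by
    rw [abs_neg]; exact hM x hx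
  linarith [wronskian_regSol_nonpos hα h hM]

lemma abs_neg_eq_of_mul_eq_zero (h : IsGPSWFSolution α p v y) (h0 : v 0 * y 0 = 0) {x : ℝ}
    (hx : x ∈ Ioo (-1 : ℝ) 1) : |v (-x)| = |v x| := by
  rcases mul_eq_zero.1 h0 with hv | hy
  · have := eq_zero (h.reflect.add_const_mul h 1) (by simp [hv]) (by simp) hx
    rw [eq_neg_of_add_eq_zero_left this, one_mul, abs_neg]
  · have := eq_zero (h.reflect.add_const_mul h (-1)) (by simp) (by simp [hy]) hx
    rw [eq_neg_of_add_eq_zero_left this, neg_one_mul, neg_neg]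

end IsGPSWFSolution

lemma HasBoundedSolution.regSol_mul_regFlux_eq_zero (hα : 0 ≤ α) (h : HasBoundedSolution α p) :
    regSol α p 0 * regFlux α p 0 = 0 := by
  obtain ⟨v, y, h, ⟨x, hx, hvx⟩, M, hM⟩ := h
  by_contra! hne
  have hW := h.wronskian_regSol_eq_zero hα hM
  have hW' := h.reflect.wronskian_regSol_eq_zero hα (M := M) fun x hx =>
    hM (-x) ⟨by linarith [hx.2], by linarith [hx.1]⟩
  rw [neg_zero] at hW'
  have hy : regSol α p 0 * y 0 = 0 := by linarith
  have hv : regFlux α p 0 * v 0 = 0 := by linarith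
  exact hvx (h.eq_zero ((mul_eq_zero.1 hv).resolve_left (right_ne_zero_of_mul hne))
    ((mul_eq_zero.1 hy).resolve_left (left_ne_zero_of_mul hne)) hx)

lemma exists_abs_regSol_le (hα : -1 < α) (h : regSol α p 0 * regFlux α p 0 = 0) :
    ∃ M, ∀ x ∈ Ioo (-1 : ℝ) 1, |regSol α p x| ≤ M := by
  obtain ⟨M, hM⟩ := isCompact_Icc.exists_bound_of_continuousOn (continuousOn_regSol hα p)
  refine ⟨M, fun x hx => ?_⟩
  rcases le_total 0 x with h0 | h0
  · exact hM x ⟨h0, hx.2.le⟩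
  · rw [← (isGPSWFSolution_regSol hα p).abs_neg_eq_of_mul_eq_zero h hx]
    exact hM (-x) ⟨by linarith, by linarith [hx.1]⟩

lemma hasBoundedSolution_iff (hα : 0 ≤ α) :
    HasBoundedSolution α p ↔ regSol α p 0 * regFlux α p 0 = 0 :=
  ⟨HasBoundedSolution.regSol_mul_regFlux_eq_zero hα, fun h =>
    hasBoundedSolution_of_exists_abs_regSol_le (by linarith)
      (exists_abs_regSol_le (by linarith) h)⟩

end BoundedSolutions

section LagrangeIdentity

variable {α : ℝ}

lemma integral_regSol_lagrange (hα : 0 ≤ α) (p : ℝ × ℝ) {z ζ f : ℝ → ℝ}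
    (hz : ∀ x ∈ Ioo (0 : ℝ) 1, HasDerivAt z (gegenbauerWeight (-(α + 1)) x * ζ x) x)
    (hζ : ∀ x ∈ Ioo (0 : ℝ) 1, HasDerivAt ζ (f x) x) (hzc : ContinuousOn z (Icc 0 1))
    (hζc : ContinuousOn ζ (Icc 0 1)) (hfc : ContinuousOn f (Icc 0 1)) (hζ1 : ζ 1 = 0) :
    ∫ x in (0 : ℝ)..1, regSol α p x * (f x + gegenbauerWeight α x * (p.1 - p.2 * x ^ 2) * z x) =
      regFlux α p 0 * z 0 - regSol α p 0 * ζ 0 := by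
  have hα' : -1 < α := by linarith
  have hu := continuousOn_regSol hα' p
  have hy := continuousOn_regFlux hα' p
  have hw := (continuous_gegenbauerWeight hα).continuousOn (s := Icc 0 1)
  rw [intervalIntegral.integral_eq_sub_of_hasDerivAt_of_le zero_le_one
    (f := fun x => regSol α p x * ζ x - regFlux α p x * z x) ((hu.mul hζc).sub (hy.mul hzc))
    (fun x hx => (isGPSWFSolution_regSol hα' p).hasDerivAt_lagrange
      ⟨by linarith [hx.1], hx.2⟩ (hz x hx) (hζ x hx))]
  · rw [hζ1, regFlux_one hα']
    ring
  · refine ContinuousOn.intervalIntegrable ?_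
    rw [uIcc_of_le zero_le_one]
    exact hu.mul (hfc.add ((hw.mul (by fun_prop)).mul hzc))

end LagrangeIdentity

section Jacobi

variable {α χ : ℝ}

lemma regCoeff_jacobi_eq_zero (hα : -1 < α) (n : ℕ) {k : ℕ} (hk : n < k) :
    regCoeff α ((n : ℝ) * (n + 2 * α + 1), 0) k = 0 := by
  have hrec (j : ℕ) := paddedRegCoeff_recurrence hα ((n : ℝ) * (n + 2 * α + 1), 0) j
  have hpos (j : ℕ) : (0 : ℝ) < 2 * (j + 1) * (j + α + 1) :=
    mul_pos (by positivity) (by linarith [(j.cast_nonneg : (0 : ℝ) ≤ j)])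
  induction k, hk using Nat.le_induction with
  | base =>
    refine (mul_eq_zero.1 ((hrec n).trans ?_)).resolve_left (hpos n).ne'
    ring
  | succ k _ ih =>
    refine (mul_eq_zero.1 ((hrec k).trans ?_)).resolve_left (hpos k).ne'
    rw [regCoeff] at ih
    rw [ih]
    ring

lemma hasBoundedSolution_jacobi (hα : -1 < α) (n : ℕ) :
    HasBoundedSolution α ((n : ℝ) * (n + 2 * α + 1), 0) := by
  have hcont : Continuous (regSol α ((n : ℝ) * (n + 2 * α + 1), 0)) :=
    (continuous_powSum_of_forall_lt_eq_zero fun k => regCoeff_jacobi_eq_zero hα n).comp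
      (continuous_const.sub continuous_id)
  obtain ⟨M, hM⟩ := isCompact_Icc.exists_bound_of_continuousOn
    (hcont.continuousOn (s := Icc (-1) 1))
  exact hasBoundedSolution_of_exists_abs_regSol_le hα ⟨M, fun x hx => hM x (Ioo_subset_Icc_self hx)⟩

/-- The moments on `[0, 1]`, with respect to the weight `(1 - x²)^α`, of the regular solution for
`c = 0`. -/
noncomputable def regMoment (α χ : ℝ) (m : ℕ) : ℝ :=
  ∫ x in (0 : ℝ)..1, gegenbauerWeight α x * regSol α (χ, 0) x * x ^ m

lemma hasDerivAt_gegenbauerWeight_mul_pow (α : ℝ) (m : ℕ) {x : ℝ} (hx : x ∈ Ioo (-1 : ℝ) 1) :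
    HasDerivAt (fun x => m * gegenbauerWeight (α + 1) x * x ^ (m - 1))
      (gegenbauerWeight α x *
        (m * (m - 1) * x ^ (m - 2) - m * (m + 2 * α + 1) * x ^ m)) x := by
  refine (((hasDerivAt_gegenbauerWeight (α + 1) hx).const_mul (m : ℝ)).mul
    (hasDerivAt_pow (m - 1) x)).congr_deriv ?_
  rw [add_sub_cancel_right, gegenbauerWeight_add α 1 hx, gegenbauerWeight_exponent_one]
  match m with
  | 0 => simp
  | 1 => push_cast; ring
  | m + 2 =>
    simp only [Nat.add_sub_cancel_right, Nat.add_succ_sub_one]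
    push_cast
    ring

lemma regMoment_recurrence (hα : 0 ≤ α) (χ : ℝ) (m : ℕ) :
    (χ - m * (m + 2 * α + 1)) * regMoment α χ m + m * (m - 1) * regMoment α χ (m - 2) =
      regFlux α (χ, 0) 0 * 0 ^ m - regSol α (χ, 0) 0 * (m * 0 ^ (m - 1)) := by
  have hu := continuousOn_regSol (by linarith) (χ, 0) (α := α)
  have hw (β : ℝ) (hβ : 0 ≤ β) : ContinuousOn (gegenbauerWeight β) (Icc 0 1) :=
    (continuous_gegenbauerWeight hβ).continuousOn
  have hint (k : ℕ) : IntervalIntegrable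
      (fun x => gegenbauerWeight α x * regSol α (χ, 0) x * x ^ k) MeasureTheory.volume 0 1 := by
    refine ContinuousOn.intervalIntegrable ?_
    rw [uIcc_of_le zero_le_one]
    exact ((hw α hα).mul hu).mul (by fun_prop)
  have hsub : Ioo (0 : ℝ) 1 ⊆ Ioo (-1) 1 := Ioo_subset_Ioo_left (by norm_num)
  have hlagrange := integral_regSol_lagrange hα (χ, 0) (z := fun x => x ^ m)
    (fun x hx => (hasDerivAt_pow m x).congr_deriv (by
      rw [gegenbauerWeight_exponent_neg _ (hsub hx)]
      field_simp [(gegenbauerWeight_pos (hsub hx)).ne']))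
    (fun x hx => hasDerivAt_gegenbauerWeight_mul_pow α m (hsub hx)) (by fun_prop)
    ((continuousOn_const.mul (hw (α + 1) (by linarith))).mul (by fun_prop))
    ((hw α hα).mul (by fun_prop)) (by rw [gegenbauerWeight_one (by linarith)]; ring)
  rw [gegenbauerWeight_zero, mul_one] at hlagrange
  rw [← hlagrange, regMoment, regMoment, ← intervalIntegral.integral_const_mul,
    ← intervalIntegral.integral_const_mul,
    ← intervalIntegral.integral_add ((hint m).const_mul _) ((hint (m - 2)).const_mul _)]
  refine intervalIntegral.integral_congr fun x _ => ?_
  ring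

lemma regMoment_eq_zero (hα : 0 ≤ α) (hχ : ∀ m : ℕ, χ ≠ m * (m + 2 * α + 1)) {e : ℕ}
    (he : regMoment α χ e = 0) (k : ℕ) : regMoment α χ (2 * k + e) = 0 := by
  induction k with
  | zero => rwa [mul_zero, zero_add]
  | succ k ih =>
    have hrec := regMoment_recurrence hα χ (2 * k + e + 2)
    rw [Nat.add_sub_cancel, ih, zero_pow (by omega), zero_pow (by omega)] at hrec
    rw [show 2 * (k + 1) + e = 2 * k + e + 2 by ring]
    exact (mul_eq_zero.1 (by linear_combination hrec)).resolve_left (sub_ne_zero.2 (hχ _))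

lemma regMoment_ne_zero (hα : 0 ≤ α) (hχ : ∀ m : ℕ, χ ≠ m * (m + 2 * α + 1)) (e : ℕ) :
    regMoment α χ e ≠ 0 := by
  intro he
  have hα' : -1 < α := by linarith
  obtain ⟨x, hx, hne⟩ := exists_regSol_ne_zero hα' (χ, 0)
  have hzero := eqOn_zero_of_forall_integral_pow_mul_eq_zero zero_lt_one
    (h := fun x => x ^ 2) (f := fun x => gegenbauerWeight α x * regSol α (χ, 0) x * x ^ e)
    (by fun_prop) (fun x hx z hz hxz => (sq_eq_sq₀ hx.1 hz.1).1 hxz)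
    ((((continuous_gegenbauerWeight hα).continuousOn).mul (continuousOn_regSol hα' _)).mul
      (by fun_prop)) (fun k => by
        refine Eq.trans ?_ (regMoment_eq_zero hα hχ he k)
        exact intervalIntegral.integral_congr fun x _ => by ring)
    (Ioo_subset_Icc_self hx)
  exact mul_ne_zero (mul_ne_zero (gegenbauerWeight_pos ⟨by linarith [hx.1], hx.2⟩).ne' hne)
    (pow_ne_zero e hx.1.ne') hzero

lemma hasBoundedSolution_jacobi_iff (hα : 0 ≤ α) :
    HasBoundedSolution α (χ, 0) ↔ χ ∈ range fun n : ℕ => (n : ℝ) * (n + 2 * α + 1) := by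
  constructor
  · intro h
    by_contra hχ
    replace hχ (m : ℕ) : χ ≠ m * (m + 2 * α + 1) := fun h => hχ ⟨m, h.symm⟩
    rcases mul_eq_zero.1 (h.regSol_mul_regFlux_eq_zero hα) with hu | hy
    · refine regMoment_ne_zero hα hχ 1
        ((mul_eq_zero.1 ?_).resolve_left (sub_ne_zero.2 (hχ 1)))
      have hrec := regMoment_recurrence hα χ 1
      push_cast at hrec ⊢
      linear_combination hrec - hu
    · refine regMoment_ne_zero hα hχ 0
        ((mul_eq_zero.1 ?_).resolve_left (sub_ne_zero.2 (hχ 0)))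
      have hrec := regMoment_recurrence hα χ 0
      push_cast at hrec ⊢
      linear_combination hrec + hy
  · rintro ⟨n, rfl⟩
    exact hasBoundedSolution_jacobi (by linarith) n

end Jacobi

section Angle

variable {α : ℝ}

lemma wronskian_regSol_eq_integral (hα : 0 ≤ α) (p q : ℝ × ℝ) :
    regSol α p 0 * regFlux α q 0 - regFlux α p 0 * regSol α q 0 =
      ∫ x in (0 : ℝ)..1, gegenbauerWeight α x * ((q.1 - p.1) - (q.2 - p.2) * x ^ 2) *
        (regSol α p x * regSol α q x) := by
  have hα' : -1 < α := by linarith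
  have hsub : Ioo (0 : ℝ) 1 ⊆ Ioo (-1) 1 := Ioo_subset_Ioo_left (by norm_num)
  have hq := (isGPSWFSolution_regSol hα' q).mono hsub
  have hlagrange := integral_regSol_lagrange hα p hq.hasDerivAt hq.hasDerivAt_flux
    (continuousOn_regSol hα' q) (continuousOn_regFlux hα' q)
    ((((continuous_gegenbauerWeight hα).continuousOn.mul (by fun_prop)).mul
      (continuousOn_regSol hα' q)).neg) (regFlux_one hα' q)
  rw [← neg_sub, ← hlagrange, ← intervalIntegral.integral_neg]
  refine intervalIntegral.integral_congr fun x _ => ?_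
  ring

lemma integral_mul_regSol_sq_pos (hα : 0 ≤ α) (p : ℝ × ℝ) {κ : ℝ → ℝ} (hκ : Continuous κ)
    (hκ0 : ∀ x ∈ Ioo (0 : ℝ) 1, 0 < κ x) :
    0 < ∫ x in (0 : ℝ)..1, gegenbauerWeight α x * κ x * (regSol α p x * regSol α p x) := by
  have hα' : -1 < α := by linarith
  have hu := continuousOn_regSol hα' p
  obtain ⟨x, hx, hne⟩ := exists_regSol_ne_zero hα' p
  refine intervalIntegral.integral_pos zero_lt_one
    (((continuous_gegenbauerWeight hα).mul hκ).continuousOn.mul (hu.mul hu)) (fun x hx => ?_)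
    ⟨x, Ioo_subset_Icc_self hx, mul_pos (mul_pos
      (gegenbauerWeight_pos ⟨by linarith [hx.1], hx.2⟩) (hκ0 x hx)) (mul_self_pos.2 hne)⟩
  have hκ1 : 0 ≤ κ x := closure_minimal (fun t ht => (hκ0 t ht).le)
    (isClosed_le continuous_const hκ) ((closure_Ioo (zero_ne_one' ℝ)).ge (Ioc_subset_Icc_self hx))
  have hw : 0 ≤ gegenbauerWeight α x := rpow_nonneg (by nlinarith [hx.1, hx.2]) _
  exact mul_nonneg (mul_nonneg hw hκ1) (mul_self_nonneg _)

lemma eventually_wronskian_regSol_pos (hα : 0 ≤ α) (p d : ℝ × ℝ)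
    (hd : ∀ x ∈ Ioo (0 : ℝ) 1, 0 < d.1 - d.2 * x ^ 2) :
    ∀ᶠ ε in 𝓝[>] (0 : ℝ),
      0 < regSol α p 0 * regFlux α (p + ε • d) 0 - regFlux α p 0 * regSol α (p + ε • d) 0 := by
  have hα' : -1 < α := by linarith
  set F : ℝ → ℝ → ℝ := fun ε x =>
    gegenbauerWeight α x * (d.1 - d.2 * x ^ 2) * (regSol α p x * regSol α (p + ε • d) x) with hF
  have hFc : ContinuousOn (Function.uncurry F) (univ ×ˢ Icc 0 1) := fun z hz => by
    have hz1 : |1 - z.2| < 2 := abs_lt.2 ⟨by linarith [hz.2.2], by linarith [hz.2.1]⟩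
    have hw : Continuous fun z : ℝ × ℝ => gegenbauerWeight α z.2 * (d.1 - d.2 * z.2 ^ 2) :=
      ((continuous_gegenbauerWeight hα).comp continuous_snd).mul (by fun_prop)
    exact (hw.continuousAt.mul
      (((continuousAt_regSol hα' p hz1).comp (f := fun z : ℝ × ℝ => (p, z.2)) (x := z)
        (by fun_prop)).mul
      ((continuousAt_regSol hα' (p + z.1 • d) hz1).comp
        (f := fun z : ℝ × ℝ => (p + z.1 • d, z.2)) (x := z) (by fun_prop)))).continuousWithinAt
  have hF0 : 0 < ∫ x in (0 : ℝ)..1, F 0 x := by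
    simpa only [hF, zero_smul, add_zero] using
      integral_mul_regSol_sq_pos hα p (κ := fun x => d.1 - d.2 * x ^ 2) (by fun_prop) hd
  filter_upwards [((continuous_intervalIntegral_of_continuousOn zero_le_one hFc).tendsto
    0).eventually_const_lt hF0 |>.filter_mono nhdsWithin_le_nhds, self_mem_nhdsWithin] with ε hε hε0
  have hW : ∀ x, gegenbauerWeight α x * (((p + ε • d).1 - p.1) - ((p + ε • d).2 - p.2) * x ^ 2) *
      (regSol α p x * regSol α (p + ε • d) x) = ε * F ε x := fun x => by
    simp only [hF, Prod.fst_add, Prod.snd_add, Prod.smul_fst, Prod.smul_snd, smul_eq_mul]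
    ring
  rw [wronskian_regSol_eq_integral hα]
  simp only [hW, intervalIntegral.integral_const_mul]
  exact mul_pos hε0 hε

/-- `θ` is a continuous choice of the polar angle of the Cauchy data at `x = 0` of the regular
solution, as a function of the parameters: a Prüfer angle. -/
def IsRegAngle (α : ℝ) (θ : ℝ × ℝ → ℝ) : Prop :=
  Continuous θ ∧ ∀ p, ∃ r > 0, regSol α p 0 = r * cos (θ p) ∧ regFlux α p 0 = r * sin (θ p)

lemma exists_isRegAngle (hα : -1 < α) : ∃ θ, IsRegAngle α θ := by
  obtain ⟨θ, r, hθ, h⟩ := exists_continuous_polar (continuous_regSol_zero hα)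
    (continuous_regFlux_zero hα) (regSol_zero_ne_zero_or_regFlux_zero_ne_zero hα)
  exact ⟨θ, hθ, fun p => ⟨r p, h p⟩⟩

namespace IsRegAngle

variable {θ : ℝ × ℝ → ℝ} {p d : ℝ × ℝ}

lemma strictMono_add_smul (h : IsRegAngle α θ) (hα : 0 ≤ α) (p : ℝ × ℝ)
    (hd : ∀ x ∈ Ioo (0 : ℝ) 1, 0 < d.1 - d.2 * x ^ 2) :
    StrictMono fun τ : ℝ => θ (p + τ • d) := by
  refine strictMono_of_eventually_sin_sub_pos (h.1.comp (by fun_prop)) fun τ => ?_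
  filter_upwards [eventually_wronskian_regSol_pos hα (p + τ • d) d hd] with ε hW
  rw [add_smul, ← add_assoc]
  obtain ⟨r, hr, hu, hy⟩ := h.2 (p + τ • d)
  obtain ⟨s, hs, hv, hz⟩ := h.2 (p + τ • d + ε • d)
  rw [hu, hy, hv, hz] at hW
  refine (pos_iff_pos_of_mul_pos (a := r * s) ?_).1 (mul_pos hr hs)
  rw [sin_sub]
  linear_combination hW

lemma mem_range_intCast_iff (h : IsRegAngle α θ) :
    2 * θ p / π ∈ range ((↑) : ℤ → ℝ) ↔ regSol α p 0 * regFlux α p 0 = 0 := by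
  obtain ⟨r, hr, hu, hy⟩ := h.2 p
  have hsin : regSol α p 0 * regFlux α p 0 = r ^ 2 / 2 * sin (2 * θ p) := by
    rw [hu, hy, sin_two_mul]
    ring
  rw [hsin, mul_eq_zero, or_iff_right (by positivity), sin_eq_zero_iff]
  exact exists_congr fun k => eq_div_iff pi_ne_zero

end IsRegAngle

lemma strictMono_jacobi_eigenvalue (hα : 0 ≤ α) :
    StrictMono fun n : ℕ => (n : ℝ) * (n + 2 * α + 1) := by
  refine strictMono_nat_of_lt_succ fun n => ?_
  push_cast
  nlinarith [(n.cast_nonneg : (0 : ℝ) ≤ n)]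

lemma exists_strictMono_hasBoundedSolution_iff (hα : 0 ≤ α) {s : ℝ} (hs : 0 ≤ s) :
    ∃ μ : ℕ → ℝ, StrictMono μ ∧ (∀ χ, HasBoundedSolution α (χ, s) ↔ χ ∈ range μ) ∧
      ∀ n : ℕ, μ n ∈ Icc ((n : ℝ) * (n + 2 * α + 1)) (n * (n + 2 * α + 1) + s) := by
  obtain ⟨θ, h⟩ := exists_isRegAngle (by linarith : -1 < α)
  have hcont (s : ℝ) : Continuous fun x => 2 * θ (x, s) / π :=
    ((h.1.comp (by fun_prop)).const_mul 2).div_const π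
  have hmono (s : ℝ) : StrictMono fun x => 2 * θ (x, s) / π := fun a b hab => by
    have := h.strictMono_add_smul hα (0, s) (d := (1, 0)) (by simp) hab
    simp only [Prod.smul_mk, smul_eq_mul, mul_one, mul_zero, Prod.mk_add_mk, zero_add,
      add_zero] at this
    dsimp only
    gcongr
  have hiff (χ s : ℝ) :
      2 * θ (χ, s) / π ∈ range ((↑) : ℤ → ℝ) ↔ HasBoundedSolution α (χ, s) :=
    h.mem_range_intCast_iff.trans (hasBoundedSolution_iff hα).symm
  have hle (x : ℝ) : θ (x, s) ≤ θ (x, 0) := by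
    have := (h.strictMono_add_smul hα (x, s) (d := (0, -1)) fun x hx => by
      simpa using pow_pos hx.1 2).monotone hs
    simpa using this
  have hdiag (x : ℝ) : θ (x, 0) ≤ θ (x + s, s) := by
    have := (h.strictMono_add_smul hα (x, 0) (d := (1, 1)) fun x hx => by
      simpa using one_sub_sq_pos (x := x) ⟨by linarith [hx.1], hx.2⟩).monotone hs
    simpa using this
  obtain ⟨μ, hμ, hμiff, hμI⟩ := exists_strictMono_mem_Icc_of_le_of_le (hcont 0) (hmono 0)
    (hcont s) (hmono s) (fun x => by gcongr; exact hle x) (fun x => by gcongr; exact hdiag x)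
    (strictMono_jacobi_eigenvalue hα) fun x => (hiff x 0).trans (hasBoundedSolution_jacobi_iff hα)
  exact ⟨μ, hμ, fun χ => (hiff χ s).symm.trans (hμiff χ), hμI⟩

end Angle

theorem chi_bounds (c α : ℝ) (hc : 0 < c) (hα : -1 < α)
    (χ : ℕ → ℝ) (hmono : StrictMono χ)
    (hrange : Set.range χ = {μ : ℝ | IsGPSWFEigenvalue c α μ}) (n : ℕ) :
    (n : ℝ) * (n + 2 * α + 1) ≤ χ n ∧ χ n ≤ (n : ℝ) * (n + 2 * α + 1) + c ^ 2 := by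
  have hmem (x : ℝ) : x ∈ range χ ↔ HasBoundedSolution α (x, c ^ 2) := by
    rw [hrange, mem_ofPred_eq, isGPSWFEigenvalue_iff_hasBoundedSolution]
  rcases le_or_gt 0 α with hα0 | hα0
  · obtain ⟨μ, hμ, hμiff, hμI⟩ := exists_strictMono_hasBoundedSolution_iff hα0 (sq_nonneg c)
    have hχμ : χ = μ :=
      (hmono.range_inj hμ).1 (Set.ext fun x => (hmem x).trans (hμiff x))
    exact hχμ ▸ hμI n
  · obtain ⟨k, hk⟩ := (hmem (χ 0 - 1)).2 (hasBoundedSolution_of_neg hα hα0 _)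
    linarith [hmono.monotone k.zero_le]
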